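/- Let k and N be positive integers and q a complex number with 0 < |q| < 1. Define S_k := Σ over all tuples (i_1, i_2, …, i_k) of nonnegative integers of q^{i_k^2 + (i_k+i_{k−1})^2 + ⋯ + (i_k+⋯+i_3+i_2)^2} · q^{k·i_k + (k−1)·i_{k−1} + ⋯ + 2·i_2 + i_1} · (q^N;q)_{i_1+⋯+i_k} · (q^{1−N};q)_{i_1+⋯+i_k} / ((q;q)_{i_1} (q;q)_{i_2} ⋯ (q;q)_{i_k}) (where the quadratic exponent involves only i_2,…,i_k; for k = 1 it is 0). Then S_k = q^{k·N(N−1)}. (The sum is finite: every term with i_1+⋯+i_k ≥ N vanishes, since (q^{1−N};q)_n = 0 for n ≥ N.) -/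

import Mathlib

/-!
Write `m = i_2 + ⋯ + i_k`. Summing over `i_1` alone is an instance of the terminating
q-Chu–Vandermonde sum with lower parameter `0`,
`∑_i (q^{-n};q)_i (b;q)_i q^i / (q;q)_i = b^n` (`qChu`), taken at `n = N - 1 - m` and
`b = q^{N+m}`. It yields `b^n = q^{N(N-1) - m² - m}`, and the factor `q^{m² + m}` by which
the exponent for `(i_1, …, i_k)` exceeds that for `(i_2, …, i_k)` (up to `i_1`) cancels the
dependence on `m`. Hence `S_k = q^{N(N-1)} S_{k-1}`, starting from `S_0 = 1`.
-/

open Finset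

/-- Finite q-Pochhammer symbol `(a;q)_n`. -/
noncomputable def qPoch (a q : ℂ) (n : ℕ) : ℂ := ∏ j ∈ Finset.range n, (1 - a * q ^ j)

/-- The summand of `S_k`: for a tuple `(i_1, …, i_k)` of nonnegative integers (here `i ⟨j⟩`
    represents `i_{j+1}`), the term
    `q^{i_k² + (i_k+i_{k−1})² + ⋯ + (i_k+⋯+i_2)²} · q^{k·i_k + ⋯ + 2·i_2 + i_1}
      · (q^N;q)_{i_1+⋯+i_k} (q^{1−N};q)_{i_1+⋯+i_k} / ((q;q)_{i_1} ⋯ (q;q)_{i_k})`. -/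
noncomputable def Sterm (k N : ℕ) (q : ℂ) (i : Fin k → ℕ) : ℂ :=
  q ^ (∑ t ∈ Finset.Ico 1 k,
        (∑ j ∈ Finset.univ.filter (fun j : Fin k => t ≤ j.val), i j) ^ 2)
    * q ^ (∑ j : Fin k, (j.val + 1) * i j)
    * qPoch (q ^ (N : ℤ)) q (∑ j, i j) * qPoch (q ^ (1 - (N : ℤ))) q (∑ j, i j)
    / ∏ j, qPoch q q (i j)

lemma qPoch_add (a q : ℂ) (m i : ℕ) :
    qPoch a q (m + i) = qPoch a q m * qPoch (a * q ^ m) q i := by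
  unfold qPoch
  rw [Finset.prod_range_add]
  simp only [pow_add, mul_assoc]

lemma qPoch_succ (a q : ℂ) (i : ℕ) :
    qPoch a q (i + 1) = qPoch a q i * (1 - a * q ^ i) := by
  simp [qPoch, Finset.prod_range_succ]

lemma qPoch_succ' (a q : ℂ) (i : ℕ) :
    qPoch a q (i + 1) = (1 - a) * qPoch (a * q) q i := by
  rw [add_comm, qPoch_add]
  simp [qPoch]

lemma one_sub_pow_ne {q : ℂ} (hq1 : ‖q‖ < 1) (j : ℕ) : 1 - q ^ (j + 1) ≠ 0 := by
  intro h
  have h2 : ‖q ^ (j + 1)‖ < 1 := by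
    rw [norm_pow]
    exact pow_lt_one₀ (norm_nonneg _) hq1 (Nat.succ_ne_zero j)
  rw [← sub_eq_zero.mp h] at h2
  simp at h2

lemma qPoch_self_ne {q : ℂ} (hq1 : ‖q‖ < 1) (i : ℕ) : qPoch q q i ≠ 0 := by
  unfold qPoch
  refine Finset.prod_ne_zero_iff.mpr fun j _ => ?_
  rw [← pow_succ']
  exact one_sub_pow_ne hq1 j

lemma qPoch_eq_zero {a q : ℂ} {n i : ℕ} (h : a * q ^ n = 1) (hi : n < i) : qPoch a q i = 0 :=
  Finset.prod_eq_zero (Finset.mem_range.mpr hi) (by rw [h, sub_self])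

/-- Terminating q-Chu–Vandermonde sum with lower parameter `0`; here `x` plays the role of
`q^{-n}`, so all terms of index above `n` vanish. Passing from `n` to `n + 1` changes the sum
by `-(1 - b) b^n`, because `(x;q)_{i+1} - (xq;q)_{i+1} = -x (1 - q^{i+1}) (xq;q)_i`. -/
lemma qChu {q : ℂ} (hq1 : ‖q‖ < 1) (n : ℕ) : ∀ (M : ℕ) (b x : ℂ), n < M → x * q ^ n = 1 →
    ∑ i ∈ Finset.range M, qPoch x q i * qPoch b q i * q ^ i / qPoch q q i = b ^ n := by
  induction n with
  | zero =>
    intro M b x hM hx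
    rw [Finset.sum_eq_single_of_mem 0 (Finset.mem_range.mpr hM)]
    · simp [qPoch]
    · intro i _ hi
      rw [qPoch_eq_zero hx (Nat.pos_of_ne_zero hi)]
      simp
  | succ n ih =>
    intro M b x hM hx
    obtain ⟨M, rfl⟩ : ∃ M', M = M' + 1 := ⟨M - 1, by omega⟩
    have hx' : x * q * q ^ n = 1 := by rw [← hx]; ring
    have h1 := ih (M + 1) b (x * q) (by omega) hx'
    have h2 := ih M (b * q) (x * q) (by omega) hx'
    rw [Finset.sum_range_succ'] at h1 ⊢
    have h3 : ∀ i, qPoch x q (i + 1) * qPoch b q (i + 1) * q ^ (i + 1) / qPoch q q (i + 1)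
        = qPoch (x * q) q (i + 1) * qPoch b q (i + 1) * q ^ (i + 1) / qPoch q q (i + 1)
        + -(x * q * (1 - b)) *
          (qPoch (x * q) q i * qPoch (b * q) q i * q ^ i / qPoch q q i) := by
      intro i
      have e1 := qPoch_self_ne hq1 i
      have e2 := one_sub_pow_ne hq1 i
      rw [qPoch_succ' x, qPoch_succ' b, qPoch_succ (x * q), qPoch_succ q, ← pow_succ']
      field_simp
      ring
    rw [Finset.sum_congr rfl fun i _ => h3 i, Finset.sum_add_distrib, ← Finset.mul_sum, h2]
    have h4 : ∀ y : ℂ, qPoch y q 0 = 1 := fun y => by simp [qPoch]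
    simp only [h4] at h1 ⊢
    linear_combination h1 - (1 - b) * b ^ n * hx

/-- The sum over the first index `a` for fixed `m = i_2 + ⋯ + i_k`. -/
lemma tsum_first_index {q : ℂ} (hq : q ≠ 0) (hq1 : ‖q‖ < 1) (N m : ℕ) (hN : 1 ≤ N) :
    ∑' a : ℕ, q ^ (m ^ 2 + m + a) * qPoch (q ^ (N : ℤ)) q (a + m)
        * qPoch (q ^ (1 - (N : ℤ))) q (a + m) / qPoch q q a
      = q ^ (N * (N - 1)) * qPoch (q ^ (N : ℤ)) q m * qPoch (q ^ (1 - (N : ℤ))) q m := by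
  have hz : q ^ (1 - (N : ℤ)) * q ^ (N - 1) = 1 := by
    rw [← zpow_natCast, ← zpow_add₀ hq]
    simp [Nat.cast_sub hN]
  rcases lt_or_ge m N with hm | hm
  · obtain ⟨n, rfl⟩ : ∃ n, N = m + n + 1 := ⟨N - 1 - m, by omega⟩
    have hz' : q ^ (1 - ((m + n + 1 : ℕ) : ℤ)) * q ^ m * q ^ n = 1 := by
      rw [mul_assoc, ← pow_add]; exact hz
    rw [tsum_eq_sum (s := Finset.range (n + 1))]
    · have h := qChu hq1 n (n + 1) (q ^ ((m + n + 1 : ℕ) : ℤ) * q ^ m) _ (by omega) hz'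
      have e : ∀ a, q ^ (m ^ 2 + m + a) * qPoch (q ^ ((m + n + 1 : ℕ) : ℤ)) q (a + m)
          * qPoch (q ^ (1 - ((m + n + 1 : ℕ) : ℤ))) q (a + m) / qPoch q q a
          = q ^ (m ^ 2 + m) * qPoch (q ^ ((m + n + 1 : ℕ) : ℤ)) q m
            * qPoch (q ^ (1 - ((m + n + 1 : ℕ) : ℤ))) q m *
            (qPoch (q ^ (1 - ((m + n + 1 : ℕ) : ℤ)) * q ^ m) q a
              * qPoch (q ^ ((m + n + 1 : ℕ) : ℤ) * q ^ m) q a * q ^ a / qPoch q q a) := by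
        intro a
        rw [add_comm a m, qPoch_add, qPoch_add, pow_add]
        ring
      rw [Finset.sum_congr rfl fun a _ => e a, ← Finset.mul_sum, h]
      have e2 : q ^ ((m + n + 1) * (m + n + 1 - 1))
          = q ^ (m ^ 2 + m) * (q ^ ((m + n + 1 : ℕ) : ℤ) * q ^ m) ^ n := by
        rw [zpow_natCast, ← pow_add, ← pow_mul, ← pow_add, Nat.add_sub_cancel]
        congr 1
        ring
      rw [e2]
      ring
    · intro a ha
      rw [Finset.mem_range] at ha
      rw [qPoch_eq_zero hz (by omega : m + n + 1 - 1 < a + m)]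
      simp
  · have h0 : ∀ i, N ≤ i → qPoch (q ^ (1 - (N : ℤ))) q i = 0 := fun i hi =>
      qPoch_eq_zero hz (by omega)
    rw [h0 m hm, mul_zero]
    simp [fun a => h0 (a + m) (by omega)]

/-- Splitting off the first index. For `k = 0` the extra exponent is `0`, so the formula also
covers the passage from the empty tuple. -/
lemma Sterm_cons (k N : ℕ) (q : ℂ) (a : ℕ) (i : Fin k → ℕ) :
    Sterm (k + 1) N q (Fin.cons a i) =
      q ^ (∑ t ∈ Finset.Ico 1 k,
        (∑ j ∈ Finset.univ.filter (fun j : Fin k => t ≤ j.val), i j) ^ 2)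
      * q ^ (∑ j : Fin k, (j.val + 1) * i j) / (∏ j, qPoch q q (i j)) *
      (q ^ ((∑ j, i j) ^ 2 + (∑ j, i j) + a) * qPoch (q ^ (N : ℤ)) q (a + ∑ j, i j)
        * qPoch (q ^ (1 - (N : ℤ))) q (a + ∑ j, i j) / qPoch q q a) := by
  have h1 : ∑ t ∈ Finset.Ico 1 (k + 1),
      (∑ j ∈ Finset.univ.filter (fun j : Fin (k + 1) => t ≤ j.val),
        (Fin.cons a i : Fin (k + 1) → ℕ) j) ^ 2
      = (∑ j, i j) ^ 2 + ∑ t ∈ Finset.Ico 1 k,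
        (∑ j ∈ Finset.univ.filter (fun j : Fin k => t ≤ j.val), i j) ^ 2 := by
    have h2 : ∀ t, ∑ j ∈ Finset.univ.filter (fun j : Fin (k + 1) => t + 1 ≤ j.val),
        (Fin.cons a i : Fin (k + 1) → ℕ) j
        = ∑ j ∈ Finset.univ.filter (fun j : Fin k => t ≤ j.val), i j := by
      intro t
      simp [Finset.sum_filter, Fin.sum_univ_succ]
    rw [← Finset.sum_Ico_add' _ 0 k 1]
    simp only [h2]
    rcases Nat.eq_zero_or_pos k with rfl | hk
    · simp
    · rw [Finset.sum_eq_sum_Ico_succ_bot hk]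
      simp
  have h3 : ∑ j : Fin (k + 1), (j.val + 1) * (Fin.cons a i : Fin (k + 1) → ℕ) j
      = a + ∑ j, i j + ∑ j : Fin k, (j.val + 1) * i j := by
    rw [Fin.sum_univ_succ, add_assoc, ← Finset.sum_add_distrib]
    simp only [Fin.cons_zero, Fin.cons_succ, Fin.val_zero, Fin.val_succ]
    congr 1
    · ring
    · exact Finset.sum_congr rfl fun j _ => by ring
  unfold Sterm
  rw [h1, h3, Fin.sum_univ_succ, Fin.prod_univ_succ]
  simp only [Fin.cons_zero, Fin.cons_succ, pow_add, div_eq_mul_inv, mul_inv]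
  ring

lemma Sterm_eq_zero {k N : ℕ} {q : ℂ} (hq : q ≠ 0) (hN : 1 ≤ N) (i : Fin k → ℕ)
    (hi : N ≤ ∑ j, i j) : Sterm k N q i = 0 := by
  have hz : q ^ (1 - (N : ℤ)) * q ^ (N - 1) = 1 := by
    rw [← zpow_natCast, ← zpow_add₀ hq]
    simp [Nat.cast_sub hN]
  unfold Sterm
  rw [qPoch_eq_zero hz (by omega : N - 1 < ∑ j, i j)]
  simp

lemma Sterm_summable {k N : ℕ} {q : ℂ} (hq : q ≠ 0) (hN : 1 ≤ N) :
    Summable (Sterm k N q) := by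
  refine summable_of_hasFiniteSupport ((Set.finite_Iic (fun _ : Fin k => N)).subset ?_)
  intro i hi
  rw [Set.mem_Iic]
  intro j
  change i j ≤ N
  by_contra hj
  refine hi (Sterm_eq_zero hq hN i ?_)
  have := Finset.single_le_sum (f := i) (fun _ _ => Nat.zero_le _) (Finset.mem_univ j)
  omega

/-- The recursion `S_{k+1} = q^{N(N-1)} S_k`. -/
lemma tsum_Sterm_succ {k N : ℕ} {q : ℂ} (hq : q ≠ 0) (hq1 : ‖q‖ < 1) (hN : 1 ≤ N) :
    ∑' i : Fin (k + 1) → ℕ, Sterm (k + 1) N q i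
      = q ^ (N * (N - 1)) * ∑' i : Fin k → ℕ, Sterm k N q i := by
  let e : (Fin k → ℕ) × ℕ ≃ (Fin (k + 1) → ℕ) :=
    (Equiv.prodComm _ _).trans (Fin.consEquiv fun _ => ℕ)
  have hs : Summable fun p => Sterm (k + 1) N q (e p) :=
    (e.summable_iff (f := Sterm (k + 1) N q)).mpr (Sterm_summable hq hN)
  rw [← e.tsum_eq, hs.tsum_prod, ← tsum_mul_left]
  refine tsum_congr fun i => ?_
  have he : ∀ a, Sterm (k + 1) N q (e (i, a)) = _ := fun a => Sterm_cons k N q a i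
  rw [tsum_congr he, tsum_mul_left, tsum_first_index hq hq1 N _ hN]
  unfold Sterm
  ring

/-- `S_k = q^{k·N(N−1)}`; moreover the sum is finite since every term with
    `i_1 + ⋯ + i_k ≥ N` vanishes. -/
theorem statement7 (k N : ℕ) (hk : 1 ≤ k) (hN : 1 ≤ N) (q : ℂ)
    (hq0 : 0 < ‖q‖) (hq1 : ‖q‖ < 1) :
    (∀ i : Fin k → ℕ, N ≤ ∑ j, i j → Sterm k N q i = 0) ∧
    ∑' i : Fin k → ℕ, Sterm k N q i = q ^ (k * N * (N - 1)) := by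
  have hq : q ≠ 0 := norm_pos_iff.mp hq0
  refine ⟨fun i => Sterm_eq_zero hq hN i, ?_⟩
  clear hk
  induction k with
  | zero => simp [tsum_fintype, Sterm, qPoch]
  | succ k ih =>
    rw [tsum_Sterm_succ hq hq1 hN, ih, ← pow_add]
    congr 1
    ring
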